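/- Let K = ℚ(q), let L_n be the Laurent polynomial ring over K in n variables with fraction field F_n, let S_n act by permuting the variables, and for λ ∈ ℤ^n let P_λ := ∑_{σ∈S_n} σ( z^λ · ∏_{1≤i<j≤n} (1 − q⁻¹ z_i z_j⁻¹)·(1 − z_i z_j⁻¹)⁻¹ ) ∈ F_n. Then each P_λ with λ antidominant (λ₁ ≤ λ₂ ≤ ⋯ ≤ λ_n) lies in L_n, and the family (P_λ), indexed by the antidominant λ ∈ ℤ^n, is a K-basis (linearly independent and spanning) of the space of S_n-invariant elements of L_n. -/

import Mathlib

noncomputable section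

set_option synthInstance.maxHeartbeats 1000000

namespace InverseSatake

/-- The field `K = ℚ(q)` of rational functions over `ℚ`. -/
abbrev K : Type := RatFunc ℚ

/-- The variable `q` of `K = ℚ(q)`. -/
abbrev q : K := RatFunc.X

/-- `L_n`: the Laurent polynomial ring over `K` in `n` variables, i.e. the group algebra
of `ℤ^n` over `K`. -/
abbrev Lau (n : ℕ) : Type := AddMonoidAlgebra K (Fin n → ℤ)

instance (n : ℕ) : IsDomain (Lau n) := NoZeroDivisors.to_isDomain _

/-- `F_n`: the field of fractions of `L_n`. -/
abbrev FF (n : ℕ) : Type _ := FractionRing (Lau n)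

instance (n : ℕ) : Field (FF n) := inferInstance

variable {n : ℕ}

/-- The action of `σ ∈ S_n` on exponent vectors: `(σ·λ)ᵢ = λ_{σ⁻¹(i)}`. -/
def permAddEquiv (σ : Equiv.Perm (Fin n)) : (Fin n → ℤ) ≃+ (Fin n → ℤ) where
  toFun v := v ∘ σ.symm
  invFun v := v ∘ σ
  left_inv v := by ext i; simp
  right_inv v := by ext i; simp
  map_add' v w := rfl

/-- The action of `S_n` on `L_n` by permuting the variables. -/
def actL (σ : Equiv.Perm (Fin n)) : Lau n ≃ₐ[K] Lau n :=
  AddMonoidAlgebra.domCongr K K (permAddEquiv σ)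

/-- The action of `S_n` on `F_n` by permuting the variables. -/
def actF (σ : Equiv.Perm (Fin n)) : FF n ≃+* FF n :=
  IsFractionRing.ringEquivOfRingEquiv (actL σ).toRingEquiv

/-- The exponent vector of the Laurent monomial `zᵢ z_j⁻¹`. -/
def eu (i j : Fin n) : Fin n → ℤ := Pi.single i 1 - Pi.single j 1

/-- The canonical embedding `L_n → F_n`. -/
def alg : Lau n →+* FF n := algebraMap (Lau n) (FF n)

/-- `P_λ = ∑_{σ ∈ S_n} σ( z^λ ∏_{i<j} (1 − q⁻¹ zᵢzⱼ⁻¹)(1 − zᵢzⱼ⁻¹)⁻¹ ) ∈ F_n`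
(Macdonald's formula for the group `GL_n`). -/
def Pfun (lam : Fin n → ℤ) : FF n :=
  ∑ σ : Equiv.Perm (Fin n),
    actF σ (alg (AddMonoidAlgebra.single lam 1) *
      ∏ i : Fin n, ∏ j ∈ Finset.Ioi i,
        (alg (1 - AddMonoidAlgebra.single (eu i j) q⁻¹)
          * (alg (1 - AddMonoidAlgebra.single (eu i j) 1))⁻¹))

/-- The `K`-submodule of `S_n`-invariant elements of `L_n`. -/
def invariants (n : ℕ) : Submodule K (Lau n) where
  carrier := {p | ∀ σ : Equiv.Perm (Fin n), actL σ p = p}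
  add_mem' hp hq σ := by rw [map_add, hp σ, hq σ]
  zero_mem' σ := map_zero _
  smul_mem' c p hp σ := by rw [map_smul, hp σ]

/-!
Multiplying `P_λ` by the Vandermonde product `V = ∏_{i<j} (z_j - z_i)` gives the antisymmetrization
of `z^λ ∏_{i<j} (z_j - t z_i)`, where `t = q⁻¹`. For antidominant `λ` all exponents of this
alternating polynomial are at most `λ + ρ` in the dominance order, and its coefficient at `λ + ρ`
is the polynomial `∑_σ t^{ℓ(σ)}` of the stabilizer of `λ`. Hence these numerators are triangular,
and they form a basis of the alternating polynomials as soon as the stabilizer polynomials do not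
vanish at `t`. This applies to `t = q⁻¹`, but also to `t = 1`, where the numerator is `V` times an
orbit sum: so every alternating polynomial is divisible by `V`, multiplication by `V` identifies
invariant with alternating polynomials, and the basis at `t = q⁻¹` can be divided by `V`.

The dominance order is tested by pairing with all antidominant vectors. On antidominant vectors
it makes the squared norm strictly increasing, so that the triangularity is well founded.
-/

section

open Finset AddMonoidAlgebra

section Triangular

variable {R M ι α : Type*} [Ring R] [AddCommGroup M] [Module R M] [Preorder α]
  {coord : M →ₗ[R] ι →₀ R} {deg : ι → α} {v : ι → M}

theorem linearIndependent_of_triangular (hdiag : ∀ i, IsUnit (coord (v i) i))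
    (htri : ∀ i j, coord (v i) j ≠ 0 → j ≠ i → deg j < deg i) : LinearIndependent R v := by
  rw [linearIndependent_iff]
  intro l hl
  by_contra hne
  obtain ⟨i, hi, hmax⟩ :=
    l.support.exists_maximalFor deg (Finsupp.support_nonempty_iff.2 hne)
  have hzero : ∀ j ∈ l.support, j ≠ i → l j * coord (v j) i = 0 := fun j hj hji => by
    by_contra hmul
    have hlt := htri j i (right_ne_zero_of_mul hmul) hji.symm
    exact hlt.not_ge (hmax hj hlt.le)
  have hdiag_mul : l i * coord (v i) i = 0 := by
    rw [← sum_eq_single_of_mem i hi hzero]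
    simpa [Finsupp.linearCombination_apply, Finsupp.sum, Finsupp.finsetSum_apply]
      using DFunLike.congr_fun (congrArg coord hl) i
  exact Finsupp.mem_support_iff.1 hi ((hdiag i).mul_left_eq_zero.1 hdiag_mul)

theorem single_mem_map_span_of_triangular [WellFoundedLT α] (hdiag : ∀ i, IsUnit (coord (v i) i))
    (htri : ∀ i j, coord (v i) j ≠ 0 → j ≠ i → deg j < deg i) (i : ι) (c : R) :
    Finsupp.single i c ∈ (Submodule.span R (Set.range v)).map coord := by
  classical
  set S := (Submodule.span R (Set.range v)).map coord
  induction i using (InvImage.wf deg wellFounded_lt).induction generalizing c with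
  | _ i ih =>
    have hvi : coord (v i) ∈ S :=
      Submodule.mem_map_of_mem (Submodule.subset_span (Set.mem_range_self i))
    have hlower : (coord (v i)).erase i ∈ S := by
      rw [← Finsupp.sum_single ((coord (v i)).erase i)]
      refine Submodule.sum_mem _ fun j hj => ih j ?_ _
      rw [Finsupp.support_erase, mem_erase, Finsupp.mem_support_iff] at hj
      exact htri i j hj.2 hj.1
    have hlead : Finsupp.single i (coord (v i) i) ∈ S := by
      rw [← Finsupp.single_add_erase i (coord (v i))] at hvi
      simpa using S.sub_mem hvi hlower
    obtain ⟨u, hu⟩ := hdiag i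
    simpa [← hu] using S.smul_mem (c * ↑u⁻¹) hlead

theorem span_eq_top_of_triangular [WellFoundedLT α] (hcoord : Function.Injective coord)
    (hdiag : ∀ i, IsUnit (coord (v i) i))
    (htri : ∀ i j, coord (v i) j ≠ 0 → j ≠ i → deg j < deg i) :
    Submodule.span R (Set.range v) = ⊤ := by
  refine Submodule.eq_top_iff'.2 fun x => ?_
  have hx : coord x ∈ (Submodule.span R (Set.range v)).map coord := by
    rw [← Finsupp.sum_single (coord x)]
    exact Submodule.sum_mem _ fun i _ => single_mem_map_span_of_triangular hdiag htri i _
  obtain ⟨y, hy, hyx⟩ := hx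
  exact hcoord hyx ▸ hy

end Triangular

section TopCoeff

/-- `HasTopCoeff D p a c`: with respect to the grading `D`, every exponent of `p` is at most `a`,
and `p` has coefficient `c` at `a`. The scalar `c` may vanish, so that the sums of several terms
bounded by the same exponent `a` can be described without tracking cancellation. -/
structure HasTopCoeff {R A B : Type*} [Semiring R] [LE B] (D : A → B) (p : R[A]) (a : A)
    (c : R) : Prop where
  le : ∀ v, p.coeff v ≠ 0 → D v ≤ D a
  coeff_eq : p.coeff a = c

namespace HasTopCoeff

variable {R A B κ : Type*}

section LE

variable [LE B] {D : A → B}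

theorem single_of_le [Semiring R] [DecidableEq A] {v a : A} (h : D v ≤ D a) (c : R) :
    HasTopCoeff D (single v c) a (if v = a then c else 0) where
  le w hw := by
    rw [coeff_single, Finsupp.single_apply_ne_zero] at hw
    exact hw.1 ▸ h
  coeff_eq := by rw [coeff_single, Finsupp.single_apply]

theorem smul {S : Type*} [Semiring R] [SMulZeroClass S R] {p : R[A]} {a : A} {c : R}
    (hp : HasTopCoeff D p a c) (s : S) : HasTopCoeff D (s • p) a (s • c) where
  le v hv := hp.le v fun h => hv (by rw [coeff_smul_apply, h, smul_zero])
  coeff_eq := by rw [coeff_smul_apply, hp.coeff_eq]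

theorem sub [Ring R] {p r : R[A]} {a : A} {c d : R} (hp : HasTopCoeff D p a c)
    (hr : HasTopCoeff D r a d) : HasTopCoeff D (p - r) a (c - d) where
  le v hv := by
    rw [coeff_sub, Finsupp.sub_apply] at hv
    by_cases h : p.coeff v = 0
    · exact hr.le v fun h' => hv (by rw [h, h', sub_zero])
    · exact hp.le v h
  coeff_eq := by rw [coeff_sub, Finsupp.sub_apply, hp.coeff_eq, hr.coeff_eq]

theorem sum [Semiring R] {s : Finset κ} {p : κ → R[A]} {a : A} {c : κ → R}
    (h : ∀ k ∈ s, HasTopCoeff D (p k) a (c k)) :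
    HasTopCoeff D (∑ k ∈ s, p k) a (∑ k ∈ s, c k) where
  le v hv := by
    rw [coeff_sum, Finsupp.finsetSum_apply] at hv
    obtain ⟨k, hk, hkv⟩ := exists_ne_zero_of_sum_ne_zero hv
    exact (h k hk).le v hkv
  coeff_eq := by
    rw [coeff_sum, Finsupp.finsetSum_apply]
    exact sum_congr rfl fun k hk => (h k hk).coeff_eq

end LE

section Mul

variable [AddCommMonoid B] [PartialOrder B] [IsOrderedCancelAddMonoid B]

theorem mul [AddMonoid A] [Semiring R] {D : A →+ B} (hD : Function.Injective D)
    {p r : R[A]} {a b : A} {c d : R} (hp : HasTopCoeff D p a c) (hr : HasTopCoeff D r b d) :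
    HasTopCoeff D (p * r) (a + b) (c * d) where
  le v hv := by
    classical
    obtain ⟨x, hx, y, hy, rfl⟩ :=
      mem_add.1 (support_coeff_mul_subset p r (Finsupp.mem_support_iff.2 hv))
    rw [map_add, map_add]
    exact add_le_add (hp.le x (Finsupp.mem_support_iff.1 hx))
      (hr.le y (Finsupp.mem_support_iff.1 hy))
  coeff_eq := by
    rw [← hp.coeff_eq, ← hr.coeff_eq]
    refine coeff_mul_add_of_uniqueAdd fun x y hx hy hxy => ?_
    have hD_eq := (add_eq_add_iff_eq_and_eq (hp.le x (Finsupp.mem_support_iff.1 hx))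
      (hr.le y (Finsupp.mem_support_iff.1 hy))).1 (by rw [← map_add, hxy, map_add])
    exact ⟨hD hD_eq.1, hD hD_eq.2⟩

theorem prod [AddCommMonoid A] [CommSemiring R] {D : A →+ B} (hD : Function.Injective D)
    {s : Finset κ} {p : κ → R[A]} {a : κ → A} {c : κ → R}
    (h : ∀ k ∈ s, HasTopCoeff D (p k) (a k) (c k)) :
    HasTopCoeff D (∏ k ∈ s, p k) (∑ k ∈ s, a k) (∏ k ∈ s, c k) := by
  classical
  induction s using Finset.induction_on with
  | empty => simpa [one_def] using single_of_le (le_refl (D 0)) (1 : R)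
  | insert k s hk ih =>
    rw [prod_insert hk, sum_insert hk, prod_insert hk]
    exact (h k (mem_insert_self k s)).mul hD (ih fun l hl => h l (mem_insert_of_mem hl))

end Mul

end HasTopCoeff

end TopCoeff

section Dominance

variable {ι : Type*} [Fintype ι]

/-- The pairings of an integer vector with all antidominant vectors, which encode the dominance
order: for the pointwise order on the target, `antidominantPairing ι a ≤ antidominantPairing ι b`
when `b - a` is a nonnegative combination of the vectors `e_j - e_i` with `i < j`, because the
antidominant vectors form the dual of the cone spanned by these. -/
def antidominantPairing (ι : Type*) [Fintype ι] [Preorder ι] :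
    (ι → ℤ) →+ ({w : ι → ℤ // Monotone w} → ℤ) where
  toFun v w := w.1 ⬝ᵥ v
  map_zero' := funext fun w => dotProduct_zero w.1
  map_add' v v' := funext fun w => dotProduct_add w.1 v v'

theorem monotone_indicator_one_of_isUpperSet {α : Type*} [Preorder α] {s : Set α}
    (hs : IsUpperSet s) : Monotone (s.indicator (1 : α → ℤ)) := by
  intro i j hij
  by_cases hi : i ∈ s
  · simp [hi, hs hij hi]
  · simp [hi, Set.indicator_nonneg]

theorem antidominantPairing_injective [PartialOrder ι] :
    Function.Injective (antidominantPairing ι) := by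
  classical
  intro a b hab
  have hupper : ∀ s : Set ι, IsUpperSet s →
      s.indicator (1 : ι → ℤ) ⬝ᵥ a = s.indicator (1 : ι → ℤ) ⬝ᵥ b := fun s hs =>
    congrFun hab ⟨_, monotone_indicator_one_of_isUpperSet hs⟩
  ext i
  have hdiff : (Pi.single i 1 : ι → ℤ) =
      (Set.Ici i).indicator (1 : ι → ℤ) - (Set.Ioi i).indicator 1 := by
    rw [← Set.indicator_sdiff Set.Ioi_subset_Ici_self, Set.Ici_sdiff_Ioi_same,
      Set.indicator_singleton, Pi.one_apply]
  rw [← single_one_dotProduct i a, ← single_one_dotProduct i b, hdiff, sub_dotProduct,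
    sub_dotProduct, hupper _ (isUpperSet_Ici i), hupper _ (isUpperSet_Ioi i)]

theorem antidominantPairing_single_le [Preorder ι] [DecidableEq ι] {i j : ι} (hij : i ≤ j) :
    antidominantPairing ι (Pi.single i 1) ≤ antidominantPairing ι (Pi.single j 1) := fun w => by
  simpa [antidominantPairing] using w.2 hij

theorem antidominantPairing_comp_perm_le [LinearOrder ι] {a : ι → ℤ} (ha : Monotone a)
    (σ : Equiv.Perm ι) : antidominantPairing ι (a ∘ σ) ≤ antidominantPairing ι a := fun w =>
  (w.2.monovary ha).sum_mul_comp_perm_le_sum_mul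

theorem dotProduct_self_lt_of_antidominantPairing_le [Preorder ι] {a b : ι → ℤ} (ha : Monotone a)
    (hb : Monotone b) (hab : antidominantPairing ι a ≤ antidominantPairing ι b) (hne : a ≠ b) :
    a ⬝ᵥ a < b ⬝ᵥ b := by
  have haa : a ⬝ᵥ a ≤ a ⬝ᵥ b := hab ⟨a, ha⟩
  have hbb : b ⬝ᵥ a ≤ b ⬝ᵥ b := hab ⟨b, hb⟩
  have hpos : 0 < (b - a) ⬝ᵥ (b - a) := by
    refine lt_of_le_of_ne (sum_nonneg fun i _ => mul_self_nonneg _) fun h => hne ?_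
    exact (sub_eq_zero.1 (dotProduct_self_eq_zero.1 h.symm)).symm
  rw [dotProduct_comm] at hbb
  simp only [sub_dotProduct, dotProduct_sub, dotProduct_comm b a] at hpos
  linarith

end Dominance

section Rho

theorem sum_Ioi_comp_perm {ι M : Type*} [Fintype ι] [LinearOrder ι] [LocallyFiniteOrderTop ι]
    [AddCommMonoid M] {f : ι → ι → M} (hf : ∀ i j, f i j = f j i) (σ : Equiv.Perm ι) :
    ∑ i, ∑ j ∈ Ioi i, f (σ i) (σ j) = ∑ i, ∑ j ∈ Ioi i, f i j := by
  have hpairs : ∀ g : Sym2 ι → M,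
      ∑ i, ∑ j ∈ Ioi i, g s(i, j) = ∑ z : Sym2 ι with ¬ z.IsDiag, g z := fun g => by
    rw [← sym2_univ, sum_sym2_filter_not_isDiag, sum_sigma']
    exact sum_equiv (Equiv.sigmaEquivProd ι ι) (by simp +contextual [ne_of_lt]) (by simp)
  have hf_pairs := hpairs (Sym2.lift ⟨f, hf⟩)
  have hfσ_pairs := hpairs fun z => Sym2.lift ⟨f, hf⟩ (z.map σ)
  simp only [Sym2.map_mk, Sym2.lift_mk] at hf_pairs hfσ_pairs
  rw [hf_pairs, hfσ_pairs]
  exact sum_bijective (Sym2.map σ)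
    (Finite.injective_iff_bijective.1 (Sym2.map.injective σ.injective))
    (by simp [Sym2.isDiag_map σ.injective]) fun _ _ => rfl

/-- The staircase vector `ρ = (0, 1, …, n - 1)`, the exponent of the leading monomial
of the Vandermonde product `∏_{i<j} (z_j - z_i)`. -/
def rho : Fin n → ℤ := fun i => (i : ℕ)

theorem sum_single_max_comp_perm (σ : Equiv.Perm (Fin n)) :
    ∑ i, ∑ j ∈ Ioi i, (Pi.single (max (σ i) (σ j)) 1 : Fin n → ℤ) = rho := by
  rw [sum_Ioi_comp_perm (f := fun i j => (Pi.single (max i j) 1 : Fin n → ℤ))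
    fun i j => by rw [max_comm]]
  calc ∑ i, ∑ j ∈ Ioi i, (Pi.single (max i j) 1 : Fin n → ℤ)
      = ∑ i, ∑ j ∈ Ioi i, Pi.single j 1 :=
        sum_congr rfl fun i _ => sum_congr rfl fun j hj => by rw [max_eq_right (mem_Ioi.1 hj).le]
    _ = ∑ j, ∑ i ∈ Iio j, Pi.single j 1 := sum_comm' (by simp)
    _ = rho := by ext k; simp [rho, Finset.sum_apply, Pi.single_apply]

theorem strictMono_add_rho {a : Fin n → ℤ} (ha : Monotone a) : StrictMono (a + rho) :=
  ha.add_strictMono fun _ _ hij => Int.ofNat_lt.2 hij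

theorem monotone_sub_rho {a : Fin n → ℤ} (ha : StrictMono a) : Monotone (a - rho) := by
  cases n with
  | zero => exact Subsingleton.monotone _
  | succ n =>
    refine Fin.monotone_iff_le_succ.2 fun i => ?_
    have hlt := ha i.castSucc_lt_succ
    simp only [Pi.sub_apply, rho, Fin.val_castSucc, Fin.val_succ]
    omega

end Rho

section Action

theorem coeff_actL (σ : Equiv.Perm (Fin n)) (p : Lau n) (v : Fin n → ℤ) :
    (actL σ p).coeff v = p.coeff (v ∘ σ) := by
  rw [actL, coeff_domCongr]
  rfl

theorem actL_single (σ : Equiv.Perm (Fin n)) (v : Fin n → ℤ) (c : K) :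
    actL σ (single v c) = single (v ∘ σ.symm) c := by
  rw [actL, domCongr_single]
  rfl

theorem actL_actL (τ σ : Equiv.Perm (Fin n)) (p : Lau n) :
    actL τ (actL σ p) = actL (τ * σ) p := by
  ext v
  simp only [coeff_actL]
  rfl

theorem actF_alg (σ : Equiv.Perm (Fin n)) (p : Lau n) : actF σ (alg p) = alg (actL σ p) :=
  IsFractionRing.ringEquivOfRingEquiv_algebraMap _ _

theorem alg_injective : Function.Injective (alg : Lau n → FF n) :=
  IsFractionRing.injective (Lau n) (FF n)

theorem actL_sign_smul (τ σ : Equiv.Perm (Fin n)) (p : Lau n) :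
    actL τ (Equiv.Perm.sign σ • p) = Equiv.Perm.sign σ • actL τ p := by
  rw [Units.smul_def, Units.smul_def, map_zsmul]

/-- The `K`-submodule of alternating elements of `L_n`: those on which `S_n` acts by the sign. -/
def alternating (n : ℕ) : Submodule K (Lau n) where
  carrier := {p | ∀ σ : Equiv.Perm (Fin n), actL σ p = Equiv.Perm.sign σ • p}
  add_mem' hp hq σ := by rw [map_add, hp σ, hq σ, smul_add]
  zero_mem' σ := by rw [map_zero, smul_zero]
  smul_mem' c p hp σ := by rw [map_smul, hp σ, smul_comm]

/-- The sum of all permutations of a Laurent polynomial. -/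
def symmetrize (p : Lau n) : invariants n :=
  ⟨∑ σ : Equiv.Perm (Fin n), actL σ p, fun τ => by
    simp only [map_sum, actL_actL]
    exact Equiv.sum_comp (Equiv.mulLeft τ) fun σ => actL σ p⟩

/-- The signed sum of all permutations of a Laurent polynomial. -/
def antisymmetrize (p : Lau n) : alternating n :=
  ⟨∑ σ : Equiv.Perm (Fin n), Equiv.Perm.sign σ • actL σ p, fun τ => by
    rw [map_sum, smul_sum, ← Equiv.sum_comp (Equiv.mulLeft τ)
      fun σ => Equiv.Perm.sign τ • Equiv.Perm.sign σ • actL σ p]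
    refine sum_congr rfl fun σ _ => ?_
    rw [actL_sign_smul, actL_actL, Equiv.coe_mulLeft, Equiv.Perm.sign_mul, smul_smul, ← mul_assoc,
      Int.units_mul_self, one_mul]⟩

theorem coeff_comp_of_mem_alternating {p : Lau n} (hp : p ∈ alternating n)
    (σ : Equiv.Perm (Fin n)) (v : Fin n → ℤ) :
    p.coeff (v ∘ σ) = Equiv.Perm.sign σ • p.coeff v := by
  rw [← coeff_actL, hp σ, coeff_smul_apply]

theorem coeff_eq_zero_of_mem_alternating {p : Lau n} (hp : p ∈ alternating n) {v : Fin n → ℤ}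
    (hv : ¬ Function.Injective v) : p.coeff v = 0 := by
  obtain ⟨i, j, hij, hne⟩ := Function.not_injective_iff.1 hv
  have hswap := coeff_comp_of_mem_alternating hp (Equiv.swap i j) v
  rw [Equiv.Perm.sign_swap hne, Units.neg_smul, one_smul, Equiv.comp_swap_eq_update, hij,
    Function.update_eq_self, ← hij, Function.update_eq_self] at hswap
  exact self_eq_neg.1 hswap

theorem eq_zero_of_mem_alternating {p : Lau n} (hp : p ∈ alternating n)
    (h : ∀ v, StrictMono v → p.coeff v = 0) : p = 0 := by
  ext v
  by_cases hv : Function.Injective v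
  · have hsort := coeff_comp_of_mem_alternating hp (Tuple.sort v) v
    rw [h _ ((Tuple.monotone_sort v).strictMono_of_injective
      (hv.comp (Tuple.sort v).injective))] at hsort
    exact (smul_eq_zero_iff_eq _).1 hsort.symm
  · exact coeff_eq_zero_of_mem_alternating hp hv

/-- The coordinates of an alternating Laurent polynomial: its coefficients at the strictly
increasing exponents, written as `λ + ρ` with `λ` antidominant. -/
def antidominantCoeff (n : ℕ) :
    alternating n →ₗ[K] {lam : Fin n → ℤ // Monotone lam} →₀ K :=
  Finsupp.lcomapDomain (fun lam : {lam : Fin n → ℤ // Monotone lam} => lam.1 + rho)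
      (fun _ _ h => Subtype.ext (add_right_cancel h)) ∘ₗ
    (coeffLinearEquiv K).toLinearMap ∘ₗ (alternating n).subtype

theorem antidominantCoeff_apply (p : alternating n) (lam : {lam : Fin n → ℤ // Monotone lam}) :
    antidominantCoeff n p lam = (p : Lau n).coeff (lam.1 + rho) := rfl

theorem antidominantCoeff_injective : Function.Injective (antidominantCoeff n) := by
  refine (injective_iff_map_eq_zero _).2 fun p hp => Subtype.ext ?_
  refine eq_zero_of_mem_alternating p.2 fun v hv => ?_
  have hcoeff := DFunLike.congr_fun hp ⟨v - rho, monotone_sub_rho hv⟩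
  rwa [antidominantCoeff_apply, sub_add_cancel] at hcoeff

end Action

section Numerator

/-- The polynomial `z_j - t z_i`. -/
def linearFactor (t : K) (i j : Fin n) : Lau n :=
  single (Pi.single j 1) 1 - single (Pi.single i 1) t

/-- The product `∏_{i<j} (z_j - t z_i)`; at `t = 1` it is the Vandermonde product. -/
def deformedVandermonde (n : ℕ) (t : K) : Lau n :=
  ∏ i : Fin n, ∏ j ∈ Ioi i, linearFactor t i j

theorem actL_linearFactor (σ : Equiv.Perm (Fin n)) (t : K) (i j : Fin n) :
    actL σ (linearFactor t i j) = linearFactor t (σ i) (σ j) := by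
  have hcomp : ∀ k : Fin n, (Pi.single k 1 : Fin n → ℤ) ∘ σ.symm = Pi.single (σ k) 1 := fun k => by
    ext l
    simp only [Function.comp_apply, Pi.single_apply, Equiv.symm_apply_eq]
  rw [linearFactor, map_sub, actL_single, actL_single, hcomp, hcomp, linearFactor]

theorem actL_deformedVandermonde (σ : Equiv.Perm (Fin n)) (t : K) :
    actL σ (deformedVandermonde n t) = ∏ i, ∏ j ∈ Ioi i, linearFactor t (σ i) (σ j) := by
  simp only [deformedVandermonde, map_prod, actL_linearFactor]

theorem deformedVandermonde_one_mem_alternating : deformedVandermonde n 1 ∈ alternating n :=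
  fun σ => by
    rw [actL_deformedVandermonde, Units.smul_def, zsmul_eq_mul]
    exact σ.prod_Ioi_comp_eq_sign_mul_prod fun i j => (neg_sub _ _).symm

theorem pi_single_left_injective {ι M : Type*} [DecidableEq ι] [Zero M] {x : M} (hx : x ≠ 0) :
    Function.Injective fun i : ι => (Pi.single i x : ι → M) := fun i j hij => by
  by_contra hne
  have hi := congrFun hij i
  simp [hne, hx] at hi

theorem linearFactor_one_ne_zero {i j : Fin n} (hij : i ≠ j) : linearFactor 1 i j ≠ 0 :=
  sub_ne_zero.2 fun h =>
    hij (pi_single_left_injective one_ne_zero (single_left_injective one_ne_zero h)).symm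

theorem deformedVandermonde_one_ne_zero : deformedVandermonde n 1 ≠ 0 :=
  prod_ne_zero_iff.2 fun _ _ => prod_ne_zero_iff.2 fun _ hj =>
    linearFactor_one_ne_zero (mem_Ioi.1 hj).ne

theorem hasTopCoeff_linearFactor (t : K) {i j : Fin n} (hij : i ≠ j) :
    HasTopCoeff (antidominantPairing (Fin n)) (linearFactor t i j) (Pi.single (max i j) 1)
      (if i < j then 1 else -t) := by
  have hsub := (HasTopCoeff.single_of_le (antidominantPairing_single_le (le_max_right i j))
    (1 : K)).sub (HasTopCoeff.single_of_le (antidominantPairing_single_le (le_max_left i j)) t)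
  simp only [(pi_single_left_injective (one_ne_zero (α := ℤ))).eq_iff] at hsub
  rcases hij.lt_or_gt with h | h
  · simpa [linearFactor, h.le, h, h.ne] using hsub
  · simpa [linearFactor, h.le, h.not_gt, h.ne] using hsub

theorem hasTopCoeff_actL_deformedVandermonde (t : K) (σ : Equiv.Perm (Fin n)) :
    HasTopCoeff (antidominantPairing (Fin n)) (actL σ (deformedVandermonde n t)) rho
      (∏ i, ∏ j ∈ Ioi i, if σ i < σ j then 1 else -t) := by
  rw [actL_deformedVandermonde, ← sum_single_max_comp_perm σ]
  refine .prod antidominantPairing_injective fun i _ =>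
    .prod antidominantPairing_injective fun j hj => hasTopCoeff_linearFactor t ?_
  exact σ.injective.ne (mem_Ioi.1 hj).ne

/-- The numerator of the Hall–Littlewood sum `∑_σ σ(z^λ ∏_{i<j} (1 - t z_i/z_j)/(1 - z_i/z_j))` over
the Vandermonde denominator. -/
def hallLittlewoodNumerator (t : K) (lam : Fin n → ℤ) : alternating n :=
  antisymmetrize (single lam 1 * deformedVandermonde n t)

/-- The polynomial `∑_σ t^{ℓ(σ)}`, `σ` in the stabilizer of `lam`, where `ℓ` is the number
of inversions. -/
def stabilizerPoincare (lam : Fin n → ℤ) : Polynomial ℚ :=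
  ∑ σ : Equiv.Perm (Fin n) with lam ∘ σ.symm = lam,
    ∏ i, ∏ j ∈ Ioi i, if σ i < σ j then 1 else Polynomial.X

theorem sign_smul_prod_ite {R : Type*} [CommRing R] (σ : Equiv.Perm (Fin n)) (t : R) :
    Equiv.Perm.sign σ • ∏ i, ∏ j ∈ Ioi i, (if σ i < σ j then 1 else -t) =
      ∏ i, ∏ j ∈ Ioi i, if σ i < σ j then 1 else t := by
  rw [Units.smul_def, zsmul_eq_mul, Equiv.Perm.sign_eq_prod_prod_Ioi]
  simp only [Units.coe_prod, Int.cast_prod, ← prod_mul_distrib]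
  refine prod_congr rfl fun i _ => prod_congr rfl fun j _ => ?_
  split_ifs <;> simp

theorem hasTopCoeff_hallLittlewoodNumerator (t : K) {lam : Fin n → ℤ} (hlam : Monotone lam) :
    HasTopCoeff (antidominantPairing (Fin n)) (hallLittlewoodNumerator t lam : Lau n) (lam + rho)
      (Polynomial.aeval t (stabilizerPoincare lam)) := by
  have hterm : ∀ σ : Equiv.Perm (Fin n),
      HasTopCoeff (antidominantPairing (Fin n))
        (Equiv.Perm.sign σ • actL σ (single lam 1 * deformedVandermonde n t)) (lam + rho)
        (if lam ∘ σ.symm = lam then ∏ i, ∏ j ∈ Ioi i, (if σ i < σ j then 1 else t) else 0) := by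
    intro σ
    rw [map_mul, actL_single, ← sign_smul_prod_ite]
    convert! ((HasTopCoeff.single_of_le (antidominantPairing_comp_perm_le hlam σ.symm) (1 : K)).mul
      antidominantPairing_injective (hasTopCoeff_actL_deformedVandermonde t σ)).smul
      (Equiv.Perm.sign σ) using 1
    rw [ite_mul, one_mul, zero_mul, smul_ite, smul_zero]
  have hcoeff : Polynomial.aeval t (stabilizerPoincare lam) = ∑ σ : Equiv.Perm (Fin n),
      if lam ∘ σ.symm = lam then ∏ i, ∏ j ∈ Ioi i, (if σ i < σ j then 1 else t) else 0 := by
    simp only [stabilizerPoincare, sum_filter, map_sum, map_prod, apply_ite (Polynomial.aeval t),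
      map_zero, map_one, Polynomial.aeval_X]
  exact hcoeff ▸ .sum fun σ _ => hterm σ

end Numerator

section Poincare

theorem eval_one_stabilizerPoincare_ne_zero (lam : Fin n → ℤ) :
    (stabilizerPoincare lam).eval 1 ≠ 0 := by
  simp only [stabilizerPoincare, Polynomial.eval_finsetSum, Polynomial.eval_prod,
    apply_ite (Polynomial.eval (1 : ℚ)), Polynomial.eval_one, Polynomial.eval_X, ite_self,
    prod_const_one, sum_const, nsmul_one, Nat.cast_ne_zero]
  have hone : (1 : Equiv.Perm (Fin n)) ∈ univ.filter fun σ => lam ∘ σ.symm = lam :=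
    mem_filter.2 ⟨mem_univ _, rfl⟩
  exact (card_pos.2 ⟨1, hone⟩).ne'

theorem aeval_one_stabilizerPoincare_ne_zero (lam : Fin n → ℤ) :
    Polynomial.aeval (1 : K) (stabilizerPoincare lam) ≠ 0 := by
  rw [← map_one (algebraMap ℚ K), Polynomial.aeval_algebraMap_apply, Polynomial.coe_aeval_eq_eval]
  exact (map_ne_zero _).2 (eval_one_stabilizerPoincare_ne_zero lam)

theorem aeval_stabilizerPoincare_ne_zero_of_transcendental {t : K} (ht : Transcendental ℚ t)
    (lam : Fin n → ℤ) : Polynomial.aeval t (stabilizerPoincare lam) ≠ 0 := fun h =>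
  eval_one_stabilizerPoincare_ne_zero lam (by
    rw [transcendental_iff.1 ht _ h, Polynomial.eval_zero])

theorem transcendental_q_inv : Transcendental ℚ q⁻¹ := fun h => by
  refine RatFunc.transcendental_X (K := ℚ) ?_
  convert IsAlgebraic.inv_iff.1 h
  exact Subsingleton.elim _ _

end Poincare

section Triangularity

/-- The squared norm `|λ + ρ|²`, the degree with respect to which the numerators are triangular.
It is a natural number so that descent on it is well founded. -/
def shiftedNormSq (lam : Fin n → ℤ) : ℕ := ((lam + rho) ⬝ᵥ (lam + rho)).toNat

theorem shiftedNormSq_lt_of_antidominantCoeff_ne_zero (t : K)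
    (lam mu : {lam : Fin n → ℤ // Monotone lam})
    (hcoeff : antidominantCoeff n (hallLittlewoodNumerator t lam.1) mu ≠ 0) (hne : mu ≠ lam) :
    shiftedNormSq mu.1 < shiftedNormSq lam.1 := by
  have hlt := dotProduct_self_lt_of_antidominantPairing_le (strictMono_add_rho mu.2).monotone
    (strictMono_add_rho lam.2).monotone
    ((hasTopCoeff_hallLittlewoodNumerator t lam.2).le _ hcoeff)
    fun h => hne (Subtype.ext (add_right_cancel h))
  exact (Int.toNat_lt_toNat ((sum_nonneg fun i _ => mul_self_nonneg _).trans_lt hlt)).2 hlt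

theorem isUnit_antidominantCoeff_hallLittlewoodNumerator {t : K}
    (ht : ∀ lam : Fin n → ℤ, Monotone lam → Polynomial.aeval t (stabilizerPoincare lam) ≠ 0)
    (lam : {lam : Fin n → ℤ // Monotone lam}) :
    IsUnit (antidominantCoeff n (hallLittlewoodNumerator t lam.1) lam) := by
  rw [antidominantCoeff_apply, (hasTopCoeff_hallLittlewoodNumerator t lam.2).coeff_eq]
  exact (ht lam.1 lam.2).isUnit

theorem linearIndependent_hallLittlewoodNumerator {t : K}
    (ht : ∀ lam : Fin n → ℤ, Monotone lam → Polynomial.aeval t (stabilizerPoincare lam) ≠ 0) :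
    LinearIndependent K fun lam : {lam : Fin n → ℤ // Monotone lam} =>
      hallLittlewoodNumerator t lam.1 :=
  linearIndependent_of_triangular (deg := fun lam => shiftedNormSq lam.1)
    (isUnit_antidominantCoeff_hallLittlewoodNumerator ht)
    (shiftedNormSq_lt_of_antidominantCoeff_ne_zero t)

theorem span_hallLittlewoodNumerator {t : K}
    (ht : ∀ lam : Fin n → ℤ, Monotone lam → Polynomial.aeval t (stabilizerPoincare lam) ≠ 0) :
    Submodule.span K (Set.range fun lam : {lam : Fin n → ℤ // Monotone lam} =>
      hallLittlewoodNumerator t lam.1) = ⊤ :=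
  span_eq_top_of_triangular (deg := fun lam => shiftedNormSq lam.1) antidominantCoeff_injective
    (isUnit_antidominantCoeff_hallLittlewoodNumerator ht)
    (shiftedNormSq_lt_of_antidominantCoeff_ne_zero t)

end Triangularity

section Division

/-- Multiplication by the Vandermonde product, as a map from invariant to alternating Laurent
polynomials. -/
def vandermondeMul (n : ℕ) : invariants n →ₗ[K] alternating n :=
  (LinearMap.mulLeft K (deformedVandermonde n 1)).restrict fun p hp σ => by
    rw [LinearMap.mulLeft_apply, map_mul, hp σ, deformedVandermonde_one_mem_alternating σ,
      smul_mul_assoc]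

theorem coe_vandermondeMul (p : invariants n) :
    (vandermondeMul n p : Lau n) = deformedVandermonde n 1 * p := rfl

theorem vandermondeMul_injective : Function.Injective (vandermondeMul n) := fun _ _ h =>
  Subtype.ext (mul_left_cancel₀ deformedVandermonde_one_ne_zero (congrArg Subtype.val h))

theorem vandermondeMul_symmetrize_single (lam : Fin n → ℤ) :
    vandermondeMul n (symmetrize (single lam 1)) = hallLittlewoodNumerator 1 lam := by
  refine Subtype.ext ((mul_sum _ _ _).trans (sum_congr rfl fun σ _ => ?_))
  rw [map_mul, deformedVandermonde_one_mem_alternating σ, mul_smul_comm, smul_smul,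
    Int.units_mul_self, one_smul, mul_comm]

theorem vandermondeMul_surjective : Function.Surjective (vandermondeMul n) := by
  rw [← LinearMap.range_eq_top, eq_top_iff,
    ← span_hallLittlewoodNumerator fun lam _ => aeval_one_stabilizerPoincare_ne_zero lam,
    Submodule.span_le]
  rintro _ ⟨lam, rfl⟩
  exact ⟨_, vandermondeMul_symmetrize_single lam.1⟩

/-- Multiplication by the Vandermonde product, as an isomorphism: every alternating Laurent
polynomial is the product of the Vandermonde product and an invariant one. -/
def invariantsEquivAlternating (n : ℕ) : invariants n ≃ₗ[K] alternating n :=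
  .ofBijective (vandermondeMul n) ⟨vandermondeMul_injective, vandermondeMul_surjective⟩

end Division

section HallLittlewood

/-- The Hall–Littlewood function `∑_σ σ(z^λ ∏_{i<j} (1 - t z_i/z_j)/(1 - z_i/z_j))` with
parameter `t`, so that `Pfun` is the case `t = q⁻¹`. -/
def hallLittlewood (t : K) (lam : Fin n → ℤ) : FF n :=
  ∑ σ : Equiv.Perm (Fin n),
    actF σ (alg (single lam 1) *
      ∏ i : Fin n, ∏ j ∈ Ioi i,
        (alg (1 - single (eu i j) t) * (alg (1 - single (eu i j) 1))⁻¹))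

theorem linearFactor_eq_single_mul (t : K) (i j : Fin n) :
    linearFactor t i j = single (Pi.single j 1) 1 * (1 - single (eu i j) t) := by
  rw [mul_sub, mul_one, single_mul_single, one_mul, eu, add_sub_cancel, linearFactor]

theorem alg_linearFactor_one_mul {i j : Fin n} (hij : i ≠ j) (t : K) :
    alg (linearFactor 1 i j) *
        (alg (1 - single (eu i j) t) * (alg (1 - single (eu i j) 1))⁻¹) =
      alg (linearFactor t i j) := by
  have hne := linearFactor_one_ne_zero hij
  rw [linearFactor_eq_single_mul] at hne
  have hden : alg (1 - single (eu i j) (1 : K)) ≠ 0 :=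
    (map_ne_zero_iff alg alg_injective).2 (right_ne_zero_of_mul hne)
  rw [linearFactor_eq_single_mul, linearFactor_eq_single_mul, map_mul, map_mul]
  field_simp

theorem alg_deformedVandermonde_one_mul (t : K) :
    alg (deformedVandermonde n 1) * ∏ i, ∏ j ∈ Ioi i,
        (alg (1 - single (eu i j) t) * (alg (1 - single (eu i j) 1))⁻¹) =
      alg (deformedVandermonde n t) := by
  simp only [deformedVandermonde, map_prod, ← prod_mul_distrib]
  exact prod_congr rfl fun i _ => prod_congr rfl fun j hj =>
    alg_linearFactor_one_mul (mem_Ioi.1 hj).ne t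

theorem alg_deformedVandermonde_one_mul_hallLittlewood (t : K) (lam : Fin n → ℤ) :
    alg (deformedVandermonde n 1) * hallLittlewood t lam = alg (hallLittlewoodNumerator t lam) := by
  have hsign : ∀ σ : Equiv.Perm (Fin n),
      deformedVandermonde n 1 = actL σ (Equiv.Perm.sign σ • deformedVandermonde n 1) := fun σ => by
    rw [actL_sign_smul, deformedVandermonde_one_mem_alternating σ, smul_smul, Int.units_mul_self,
      one_smul]
  simp only [hallLittlewood, hallLittlewoodNumerator, antisymmetrize, mul_sum, map_sum]
  refine sum_congr rfl fun σ _ => ?_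
  rw [hsign σ, ← actF_alg, ← actL_sign_smul, ← actF_alg, ← map_mul,
    Units.smul_def, Units.smul_def, map_zsmul, map_zsmul, smul_mul_assoc, mul_left_comm,
    alg_deformedVandermonde_one_mul, map_mul]

theorem alg_invariantsEquivAlternating_symm_hallLittlewoodNumerator (t : K) (lam : Fin n → ℤ) :
    alg ((invariantsEquivAlternating n).symm (hallLittlewoodNumerator t lam) : Lau n) =
      hallLittlewood t lam := by
  have hV : alg (deformedVandermonde n 1) ≠ 0 :=
    (map_ne_zero_iff alg alg_injective).2 deformedVandermonde_one_ne_zero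
  refine mul_left_cancel₀ hV ?_
  rw [alg_deformedVandermonde_one_mul_hallLittlewood, ← map_mul, ← coe_vandermondeMul]
  exact congrArg (fun p : alternating n => alg (p : Lau n))
    ((invariantsEquivAlternating n).apply_symm_apply _)

theorem Pfun_antidominant_basis_of_invariants_general (n : ℕ) (t : K)
    (ht : ∀ lam : Fin n → ℤ, Monotone lam → Polynomial.aeval t (stabilizerPoincare lam) ≠ 0) :
    ∃ Q : {lam : Fin n → ℤ // Monotone lam} → invariants n,
      (∀ lam : {lam : Fin n → ℤ // Monotone lam},
        alg (Q lam : Lau n) = hallLittlewood t lam.1) ∧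
      LinearIndependent K Q ∧
      Submodule.span K (Set.range Q) = ⊤ := by
  let e := (invariantsEquivAlternating n).symm
  let b := (Module.Basis.mk (linearIndependent_hallLittlewoodNumerator ht)
    (span_hallLittlewoodNumerator ht).ge).map e
  refine ⟨b, fun lam => ?_, b.linearIndependent, b.span_eq⟩
  rw [Module.Basis.map_apply, Module.Basis.mk_apply]
  exact alg_invariantsEquivAlternating_symm_hallLittlewoodNumerator t lam.1

end HallLittlewood

end

/-- The `P_λ` for antidominant `λ` (i.e. `λ₁ ≤ ⋯ ≤ λ_n`) all lie in `L_n` — in fact in the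
`S_n`-invariants — and they form a `K`-basis (a linearly independent spanning family) of
the space of `S_n`-invariant elements of `L_n`. -/
theorem Pfun_antidominant_basis_of_invariants (n : ℕ) :
    ∃ Q : {lam : Fin n → ℤ // Monotone lam} → invariants n,
      (∀ lam : {lam : Fin n → ℤ // Monotone lam}, alg (Q lam : Lau n) = Pfun lam.1) ∧
      LinearIndependent K Q ∧
      Submodule.span K (Set.range Q) = ⊤ :=
  Pfun_antidominant_basis_of_invariants_general n q⁻¹ fun lam _ =>
    aeval_stabilizerPoincare_ne_zero_of_transcendental transcendental_q_inv lam

end InverseSatake
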